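/- Let K be a field and Λ a finite-dimensional associative unital K-algebra. Let f : P_1 → P_0 be a homomorphism of finitely generated projective left Λ-modules, let X = coker(f) with projection q : P_0 → X, and set T = ker(νf), where νf : νP_1 → νP_0 is the K-linear dual of Hom_Λ(f,Λ). Then for every finite-dimensional left Λ-module L there is an exact sequence of K-vector spaces 0 → Hom_Λ(L, T) → Hom_K(Hom_Λ(P_1, L), K) → Hom_K(Hom_Λ(P_0, L), K) → Hom_K(Hom_Λ(X, L), K) → 0, in which the middle map is the K-dual of precomposition with f, the last map is the K-dual of precomposition with q, and the first map is the composite of the map Hom_Λ(L,T) → Hom_Λ(L, νP_1) induced by the inclusion T ⊆ νP_1 with the natural isomorphism Hom_Λ(L, νP_1) ≅ Hom_K(Hom_Λ(P_1, L), K). -/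

import Mathlib

open LinearMap Module

variable (K Λ : Type*) [Field K] [Ring Λ] [Algebra K Λ]

section Nu

variable (P : Type*) [AddCommGroup P] [Module Λ P]

/-- Right multiplication `g ↦ g·a` on `Hom_Λ(P, Λ)`, where `(g·a)(p) = g(p) * a`. -/
def rmul (a : Λ) : (P →ₗ[Λ] Λ) →ₗ[K] (P →ₗ[Λ] Λ) where
  toFun g :=
    { toFun := fun p => g p * a
      map_add' := fun p q => by simp [add_mul]
      map_smul' := fun c p => by simp [smul_mul_assoc, mul_assoc] }
  map_add' g h := by ext p; simp [add_mul]
  map_smul' k g := by ext p; simp [smul_mul_assoc]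

@[simp] lemma rmul_apply (a : Λ) (g : P →ₗ[Λ] Λ) (p : P) :
    rmul K Λ P a g p = g p * a := rfl

lemma rmul_one (g : P →ₗ[Λ] Λ) : rmul K Λ P 1 g = g := by ext p; simp

lemma rmul_mul (a b : Λ) (g : P →ₗ[Λ] Λ) :
    rmul K Λ P (a * b) g = rmul K Λ P b (rmul K Λ P a g) := by ext p; simp [mul_assoc]

lemma rmul_add' (a b : Λ) (g : P →ₗ[Λ] Λ) :
    rmul K Λ P (a + b) g = rmul K Λ P a g + rmul K Λ P b g := by ext p; simp [mul_add]

lemma rmul_zero' (g : P →ₗ[Λ] Λ) : rmul K Λ P 0 g = 0 := by ext p; simp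

lemma rmul_ksmul (k : K) (a : Λ) (g : P →ₗ[Λ] Λ) :
    rmul K Λ P (k • a) g = k • rmul K Λ P a g := by ext p; simp [mul_smul_comm]

/-- `νP`, the `K`-linear dual of the right `Λ`-module `Hom_Λ(P, Λ)`. -/
abbrev Nu := (P →ₗ[Λ] Λ) →ₗ[K] K

instance : SMul Λ (Nu K Λ P) :=
  ⟨fun a φ => φ.comp (rmul K Λ P a)⟩

@[simp] lemma nu_smul_apply (a : Λ) (φ : Nu K Λ P) (g : P →ₗ[Λ] Λ) :
    (a • φ) g = φ (rmul K Λ P a g) := rfl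

/-- The left `Λ`-module structure on `νP` given by `(a • φ)(g) = φ(g · a)`. -/
instance : Module Λ (Nu K Λ P) where
  one_smul φ := by ext g; simp [rmul_one]
  mul_smul a b φ := by ext g; simp [rmul_mul]
  smul_zero a := by ext g; simp
  smul_add a φ ψ := by ext g; simp
  add_smul a b φ := by ext g; simp [rmul_add']
  zero_smul φ := by ext g; simp [rmul_zero']

instance : IsScalarTower K Λ (Nu K Λ P) :=
  ⟨fun k a φ => by ext g; simp [rmul_ksmul]⟩

instance : SMulCommClass Λ K (Nu K Λ P) :=
  ⟨fun a k φ => by ext g; simp⟩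

end Nu

section NuMap

variable (P₁ P₀ : Type*) [AddCommGroup P₁] [Module Λ P₁] [AddCommGroup P₀] [Module Λ P₀]

/-- Precomposition with `f`, as a map `Hom_Λ(P₀, Λ) → Hom_Λ(P₁, Λ)`. -/
def homf (f : P₁ →ₗ[Λ] P₀) : (P₀ →ₗ[Λ] Λ) →ₗ[K] (P₁ →ₗ[Λ] Λ) where
  toFun g := g.comp f
  map_add' g h := by ext p; simp
  map_smul' k g := by ext p; simp

@[simp] lemma homf_apply (f : P₁ →ₗ[Λ] P₀) (g : P₀ →ₗ[Λ] Λ) (p : P₁) :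
    homf K Λ P₁ P₀ f g p = g (f p) := rfl

/-- `νf : νP₁ → νP₀`, the `K`-linear dual of `Hom_Λ(f, Λ)`, as a map of left `Λ`-modules. -/
def nuMap (f : P₁ →ₗ[Λ] P₀) : Nu K Λ P₁ →ₗ[Λ] Nu K Λ P₀ where
  toFun φ := φ.comp (homf K Λ P₁ P₀ f)
  map_add' φ ψ := by ext g; simp
  map_smul' a φ := by
    ext g
    show φ (rmul K Λ P₁ a (homf K Λ P₁ P₀ f g)) = φ (homf K Λ P₁ P₀ f (rmul K Λ P₀ a g))
    congr 1

end NuMap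

section Precomp

variable (A B : Type*) [AddCommGroup A] [Module Λ A] [AddCommGroup B] [Module Λ B]
variable (L : Type*) [AddCommGroup L] [Module Λ L] [Module K L] [SMulCommClass Λ K L]

/-- Precomposition with `f : A → B`, as a `K`-linear map `Hom_Λ(B, L) → Hom_Λ(A, L)`. -/
def precomp (f : A →ₗ[Λ] B) : (B →ₗ[Λ] L) →ₗ[K] (A →ₗ[Λ] L) where
  toFun h := h.comp f
  map_add' g h := by ext p; simp
  map_smul' k g := by ext p; simp

/-- For `g : Hom_Λ(A, Λ)` and `ℓ ∈ L`, the `Λ`-linear map `p ↦ g(p) • ℓ`. -/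
def smulMap (g : A →ₗ[Λ] Λ) (ℓ : L) : A →ₗ[Λ] L where
  toFun p := g p • ℓ
  map_add' p q := by simp [add_smul]
  map_smul' c p := by simp [mul_smul]

end Precomp

section DualBasis

variable (A : Type*) [AddCommGroup A] [Module Λ A]
variable (L : Type*) [AddCommGroup L] [Module Λ L]

/-- A finitely generated projective module has a finite dual basis. -/
lemma exists_finite_dual_basis [Module.Finite Λ A] [Module.Projective Λ A] :
    ∃ (n : ℕ) (b : Fin n → A) (c : Fin n → (A →ₗ[Λ] Λ)), ∀ p, ∑ j, c j p • b j = p := by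
  obtain ⟨n, s, i, -, -, hsi⟩ := Module.Finite.exists_comp_eq_id_of_projective Λ A
  refine ⟨n, fun j => s (Pi.single j 1), fun j => (LinearMap.proj j).comp i, fun p => ?_⟩
  have h : s (i p) = p := LinearMap.congr_fun hsi p
  conv_rhs => rw [← h, pi_eq_sum_univ' (i p), map_sum]
  refine Finset.sum_congr rfl fun j _ => ?_
  rw [map_smul]
  rfl

variable {Λ A L}

@[simp] lemma smulMap_apply (g : A →ₗ[Λ] Λ) (ℓ : L) (p : A) :
    smulMap Λ A L g ℓ p = g p • ℓ := rfl

lemma sum_smulMap_dual_basis {n : ℕ} {b : Fin n → A} {c : Fin n → (A →ₗ[Λ] Λ)}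
    (hbc : ∀ p, ∑ j, c j p • b j = p) (h : A →ₗ[Λ] L) :
    ∑ j, smulMap Λ A L (c j) (h (b j)) = h := by
  ext p
  conv_rhs => rw [← hbc p]
  simp [LinearMap.sum_apply]

end DualBasis

section NuHom

variable {K Λ}
variable {P : Type*} [AddCommGroup P] [Module Λ P]
variable {L : Type*} [AddCommGroup L] [Module Λ L] [Module K L] [IsScalarTower K Λ L]
  [SMulCommClass Λ K L]

/-- The map `ξ ↦ (ℓ ↦ (g ↦ ξ(g(-) • ℓ)))` from `(Hom_Λ(P, L))^*` to `Hom_Λ(L, νP)`. -/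
def dualHomToNu : ((P →ₗ[Λ] L) →ₗ[K] K) →ₗ[K] (L →ₗ[Λ] Nu K Λ P) where
  toFun ξ :=
    { toFun := fun ℓ =>
        { toFun := fun g => ξ (smulMap Λ P L g ℓ)
          map_add' := fun g h => by
            rw [← map_add]; congr 1; ext p; simp [add_smul]
          map_smul' := fun k g => by
            rw [RingHom.id_apply, ← map_smul]; congr 1; ext p; simp }
      map_add' := fun ℓ m => by
        ext g
        change ξ _ = ξ _ + ξ _
        rw [← map_add]; congr 1; ext p; simp
      map_smul' := fun a ℓ => by
        ext g
        change ξ _ = ξ _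
        congr 1; ext p; simp [mul_smul] }
  map_add' ξ ζ := rfl
  map_smul' k ξ := rfl

@[simp] lemma dualHomToNu_apply (ξ : (P →ₗ[Λ] L) →ₗ[K] K) (ℓ : L) (g : P →ₗ[Λ] Λ) :
    dualHomToNu ξ ℓ g = ξ (smulMap Λ P L g ℓ) := rfl

/-- A `K`-linear functional on `Hom_Λ(P, L)` is determined by its values on the maps
`g(-) • ℓ`. -/
lemma dual_hom_eq_zero [Module.Finite Λ P] [Module.Projective Λ P]
    {ξ : (P →ₗ[Λ] L) →ₗ[K] K} (hξ : ∀ g ℓ, ξ (smulMap Λ P L g ℓ) = 0) : ξ = 0 := by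
  obtain ⟨n, b, c, hbc⟩ := exists_finite_dual_basis Λ P
  refine LinearMap.ext fun h => ?_
  rw [← sum_smulMap_dual_basis hbc h, map_sum]
  simp [hξ]

lemma dualHomToNu_bijective [Module.Finite Λ P] [Module.Projective Λ P] :
    Function.Bijective (dualHomToNu : ((P →ₗ[Λ] L) →ₗ[K] K) →ₗ[K] (L →ₗ[Λ] Nu K Λ P)) := by
  refine ⟨(injective_iff_map_eq_zero _).2 fun ξ hξ => dual_hom_eq_zero fun g ℓ => ?_,
    fun ψ => ?_⟩
  · rw [← dualHomToNu_apply, hξ]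
    rfl
  · obtain ⟨n, b, c, hbc⟩ := exists_finite_dual_basis Λ P
    refine ⟨
      { toFun := fun h => ∑ j, ψ (h (b j)) (c j)
        map_add' := fun g h => by simp [Finset.sum_add_distrib]
        map_smul' := fun k h => by
          have hk (ℓ : L) : ψ (k • ℓ) = k • ψ ℓ := by
            rw [← algebraMap_smul Λ k ℓ, map_smul, algebraMap_smul]
          simp [hk, Finset.mul_sum] }, ?_⟩
    refine LinearMap.ext fun ℓ => LinearMap.ext fun g => ?_
    change ∑ j, ψ (g (b j) • ℓ) (c j) = ψ ℓ g
    simp only [map_smul, nu_smul_apply]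
    rw [← map_sum]
    congr 1
    ext p
    conv_rhs => rw [← hbc p]
    simp [LinearMap.sum_apply]

end NuHom

section Exactness

variable {K Λ}
variable {A B C : Type*} [AddCommGroup A] [Module Λ A] [AddCommGroup B] [Module Λ B]
  [AddCommGroup C] [Module Λ C]
variable {L : Type*} [AddCommGroup L] [Module Λ L] [Module K L] [SMulCommClass Λ K L]

lemma precomp_injective {q : B →ₗ[Λ] C} (hq : Function.Surjective q) :
    Function.Injective (precomp K Λ B C L q) := fun _ _ h =>
  (LinearMap.cancel_right hq).1 h

lemma ker_precomp_eq_range_precomp {f : A →ₗ[Λ] B} {q : B →ₗ[Λ] C}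
    (hq : Function.Surjective q) (hqf : LinearMap.ker q = LinearMap.range f) :
    LinearMap.ker (precomp K Λ A B L f) = LinearMap.range (precomp K Λ B C L q) := by
  ext h
  constructor
  · intro hh
    have hle : LinearMap.ker q ≤ LinearMap.ker h := by
      rw [hqf]
      rintro _ ⟨a, rfl⟩
      exact LinearMap.congr_fun (LinearMap.mem_ker.1 hh) a
    refine ⟨((LinearMap.ker q).liftQ h hle).comp
      (q.quotKerEquivOfSurjective hq).symm.toLinearMap, LinearMap.ext fun p => ?_⟩
    have hp : (q.quotKerEquivOfSurjective hq).symm (q p) = (LinearMap.ker q).mkQ p :=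
      (LinearEquiv.symm_apply_eq _).2 rfl
    change (LinearMap.ker q).liftQ h hle ((q.quotKerEquivOfSurjective hq).symm (q p)) = h p
    rw [hp]
    rfl
  · rintro ⟨g, rfl⟩
    refine LinearMap.mem_ker.2 (LinearMap.ext fun a => ?_)
    have ha : q (f a) = 0 := by
      rw [← LinearMap.mem_ker, hqf]
      exact ⟨a, rfl⟩
    change g (q (f a)) = 0
    rw [ha, map_zero]

end Exactness

/-- **The exact sequence in the proof of Lemma `interp`.**  Let `f : P₁ → P₀` be a map of
finitely generated projective left `Λ`-modules, `X = coker f` (presented by a surjection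
`q : P₀ → X` with `ker q = range f`), and `T = ker (νf)`.  Then for every
finite-dimensional `Λ`-module `L` there is an exact sequence of `K`-vector spaces
`0 → Hom_Λ(L,T) → (Hom_Λ(P₁,L))^* → (Hom_Λ(P₀,L))^* → (Hom_Λ(X,L))^* → 0`,
where the middle map is the `K`-dual of precomposition with `f`, the last map is the
`K`-dual of precomposition with `q`, and the first map is the composite of
`ι_* : Hom_Λ(L,T) → Hom_Λ(L,νP₁)` with the natural isomorphism
`Hom_Λ(L, νP₁) ≅ (Hom_Λ(P₁,L))^*` (whose inverse sends `ξ` to `ℓ ↦ (g ↦ ξ(g(-) • ℓ))`). -/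
theorem stmt2 [FiniteDimensional K Λ]
    (P₁ P₀ : Type*) [AddCommGroup P₁] [Module Λ P₁]
    [Module.Finite Λ P₁] [Module.Projective Λ P₁]
    [AddCommGroup P₀] [Module Λ P₀] [Module.Finite Λ P₀] [Module.Projective Λ P₀]
    (f : P₁ →ₗ[Λ] P₀)
    (X : Type*) [AddCommGroup X] [Module Λ X]
    (q : P₀ →ₗ[Λ] X) (hq : Function.Surjective q)
    (hqf : LinearMap.ker q = LinearMap.range f)
    (L : Type*) [AddCommGroup L] [Module Λ L] [Module K L] [IsScalarTower K Λ L]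
    [SMulCommClass Λ K L] [FiniteDimensional K L] :
    ∃ e : (L →ₗ[Λ] Nu K Λ P₁) ≃ₗ[K] ((P₁ →ₗ[Λ] L) →ₗ[K] K),
      -- `e` is the natural isomorphism `Hom_Λ(L, νP₁) ≅ (Hom_Λ(P₁, L))^*`:
      (∀ (ξ : (P₁ →ₗ[Λ] L) →ₗ[K] K) (ℓ : L) (g : P₁ →ₗ[Λ] Λ),
          e.symm ξ ℓ g = ξ (smulMap Λ P₁ L g ℓ)) ∧
      -- exactness at `Hom_Λ(L, T)` (injectivity of the first map):
      Function.Injective (fun ψ : L →ₗ[Λ] ↥(LinearMap.ker (nuMap K Λ P₁ P₀ f)) =>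
        e ((LinearMap.ker (nuMap K Λ P₁ P₀ f)).subtype.comp ψ)) ∧
      -- exactness at `(Hom_Λ(P₁, L))^*`:
      (∀ ζ : (P₁ →ₗ[Λ] L) →ₗ[K] K,
        (∃ ψ : L →ₗ[Λ] ↥(LinearMap.ker (nuMap K Λ P₁ P₀ f)),
            e ((LinearMap.ker (nuMap K Λ P₁ P₀ f)).subtype.comp ψ) = ζ)
          ↔ ζ.comp (precomp K Λ P₁ P₀ L f) = 0) ∧
      -- exactness at `(Hom_Λ(P₀, L))^*`:
      (∀ η : (P₀ →ₗ[Λ] L) →ₗ[K] K,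
        (∃ ζ : (P₁ →ₗ[Λ] L) →ₗ[K] K, ζ.comp (precomp K Λ P₁ P₀ L f) = η)
          ↔ η.comp (precomp K Λ P₀ X L q) = 0) ∧
      -- exactness at `(Hom_Λ(X, L))^*` (surjectivity of the last map):
      Function.Surjective (fun η : (P₀ →ₗ[Λ] L) →ₗ[K] K =>
        η.comp (precomp K Λ P₀ X L q)) := by
  refine ⟨(LinearEquiv.ofBijective dualHomToNu dualHomToNu_bijective).symm,
    fun ξ ℓ g => rfl, fun ψ φ h => ?_, fun ζ => ?_, fun η => ?_, ?_⟩
  · exact (LinearMap.cancel_left (Submodule.subtype_injective _)).1 (LinearEquiv.injective _ h)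
  · simp only [LinearEquiv.symm_apply_eq, LinearEquiv.ofBijective_apply]
    constructor
    · rintro ⟨ψ, hψ⟩
      refine dual_hom_eq_zero fun g ℓ => ?_
      have hk : nuMap K Λ P₁ P₀ f (dualHomToNu ζ ℓ) = 0 := by
        rw [← hψ]
        exact (ψ ℓ).2
      exact LinearMap.congr_fun hk g
    · intro hζ
      refine ⟨(dualHomToNu ζ).codRestrict _ fun ℓ => LinearMap.mem_ker.2 ?_,
        LinearMap.subtype_comp_codRestrict _ _ _⟩
      exact LinearMap.ext fun g => LinearMap.congr_fun hζ (smulMap Λ P₀ L g ℓ)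
  · change η ∈ LinearMap.range (precomp K Λ P₁ P₀ L f).dualMap ↔
      η ∈ LinearMap.ker (precomp K Λ P₀ X L q).dualMap
    rw [LinearMap.range_dualMap_eq_dualAnnihilator_ker,
      LinearMap.ker_dualMap_eq_dualAnnihilator_range, ker_precomp_eq_range_precomp hq hqf]
  · exact LinearMap.dualMap_surjective_of_injective (precomp_injective hq)
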